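/- Let δ>0 and s ∈ (0,1). The function r ↦ G_δ(s,r) is differentiable on (0,s), and for every r ∈ (0,s), with w = r(1−s)/(s(1−r)), one has d/dr G_δ(s,r) = K(δ)·(1−s)·w^{−1/2}(1−w)^{δ/2+1} ₂F₁((δ+1)/2,(δ+1)/2,δ/2,w) − (K(δ)/2)·(s/r)·w^{1/2}(1−w)^{δ/2} ₂F₁((δ+1)/2,(δ−1)/2,δ/2,w). -/

import Mathlib

open MeasureTheory Real Filter

/-- Ascending Pochhammer symbol `(a)_k = a(a+1)⋯(a+k-1)`. -/
noncomputable def poch (a : ℝ) (k : ℕ) : ℝ := ∏ i ∈ Finset.range k, (a + i)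

/-- Gauss hypergeometric function `₂F₁(a,b,c,z) = ∑ (a)_k (b)_k / (k! (c)_k) z^k`. -/
noncomputable def hyp2F1 (a b c z : ℝ) : ℝ :=
  ∑' k : ℕ, (poch a k * poch b k) / ((Nat.factorial k : ℝ) * poch c k) * z ^ k

/-- `K(δ) = 2 Γ((δ+1)/2)² / Γ(δ/2)²`. -/
noncomputable def Kcoef (δ : ℝ) : ℝ :=
  2 * Real.Gamma ((δ + 1) / 2) ^ 2 / Real.Gamma (δ / 2) ^ 2

/-- Two-point kernel `G_δ(s,r)`, equal to the second moment `E^δ[X_s X_r]` of a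
δ-dimensional Bessel bridge from 0 to 0 over [0,1]. -/
noncomputable def twoPt (δ s r : ℝ) : ℝ :=
  if s < r then
    Kcoef δ * (r - s) ^ (δ / 2 + 1) * (s * (1 - r)) ^ ((1 : ℝ) / 2) *
      (r * (1 - s)) ^ (-((δ + 1) / 2)) *
      hyp2F1 ((δ + 1) / 2) ((δ + 1) / 2) (δ / 2) (s * (1 - r) / (r * (1 - s)))
  else
    Kcoef δ * (s - r) ^ (δ / 2 + 1) * (r * (1 - s)) ^ ((1 : ℝ) / 2) *
      (s * (1 - r)) ^ (-((δ + 1) / 2)) *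
      hyp2F1 ((δ + 1) / 2) ((δ + 1) / 2) (δ / 2) (r * (1 - s) / (s * (1 - r)))

/-- Coefficient `D(s,r)`. -/
noncomputable def Dcoef (s r : ℝ) : ℝ :=
  if s < r then (1 - s) / ((r - s) * (1 - r)) else s / (r * (s - r))

/-- Coefficient `C_k = Γ(k+(δ+1)/2)/(Γ(δ/2) Γ(k+δ/2) k!)`. -/
noncomputable def Ccoef (δ : ℝ) (k : ℕ) : ℝ :=
  Real.Gamma ((k : ℝ) + (δ + 1) / 2) /
    (Real.Gamma (δ / 2) * Real.Gamma ((k : ℝ) + δ / 2) * (Nat.factorial k : ℝ))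

/-- Coefficient `f_k(s,r)`. -/
noncomputable def fcoef (s r : ℝ) (k : ℕ) : ℝ :=
  if s < r then (2 * (r - s)) ^ ((1 : ℝ) / 2 - (k : ℝ)) * (s / r) ^ ((k : ℝ) + 1 / 2)
  else (2 * (s - r)) ^ ((1 : ℝ) / 2 - (k : ℝ)) * ((1 - s) / (1 - r)) ^ ((k : ℝ) + 1 / 2)

/-- `Σ^δ_{r,s}(b) = Σ^δ_r(X_s | b)`, the density-weighted conditional expectation of a
δ-dimensional Bessel bridge. -/
noncomputable def SigmaRS (δ r s b : ℝ) : ℝ :=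
  ((2 : ℝ) ^ (δ / 2 - 1) * (r * (1 - r)) ^ (δ / 2))⁻¹ *
    Real.exp (-(Dcoef s r) * b ^ 2 / 2) *
    ∑' k : ℕ, Ccoef δ k * fcoef s r k * b ^ (2 * k)


/-- Coefficients of the series of `₂F₁(a,a,c,·)`. -/
noncomputable def ucoef (a c : ℝ) (k : ℕ) : ℝ :=
  (poch a k * poch a k) / ((Nat.factorial k : ℝ) * poch c k)

lemma poch_succ (a : ℝ) (k : ℕ) : poch a (k + 1) = poch a k * (a + k) := by
  simp [poch, Finset.prod_range_succ]

lemma poch_pos {a : ℝ} (ha : 0 < a) (k : ℕ) : 0 < poch a k := by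
  unfold poch
  exact Finset.prod_pos fun i _ => by positivity

lemma poch_shift (a : ℝ) (k : ℕ) : poch (a - 1) (k + 1) = (a - 1) * poch a k := by
  induction k with
  | zero => simp [poch]
  | succ k ih => rw [poch_succ, ih, poch_succ]; push_cast; ring

lemma ucoef_pos {a c : ℝ} (ha : 0 < a) (hc : 0 < c) (k : ℕ) : 0 < ucoef a c k := by
  have := poch_pos ha k
  have := poch_pos hc k
  have : (0:ℝ) < Nat.factorial k := by exact_mod_cast Nat.factorial_pos k
  unfold ucoef; positivity

lemma ucoef_succ {a c : ℝ} (hc : 0 < c) (k : ℕ) :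
    ((k : ℝ) + 1) * ucoef a c (k + 1) = ucoef a c k * (a + k) ^ 2 / (c + k) := by
  have h1 := (poch_pos hc k).ne'
  have h2 : (Nat.factorial k : ℝ) ≠ 0 := by exact_mod_cast (Nat.factorial_pos k).ne'
  have h3 : c + (k : ℝ) ≠ 0 := by positivity
  have h4 : (k : ℝ) + 1 ≠ 0 := by positivity
  unfold ucoef
  rw [poch_succ, poch_succ, Nat.factorial_succ]
  push_cast
  field_simp

lemma summable_shift {a c : ℝ} (ha : 0 < a) (hc : 0 < c) {ρ : ℝ} (h0 : 0 < ρ) (h1 : ρ < 1) :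
    Summable fun k : ℕ => ((k : ℝ) + 1) * ucoef a c (k + 1) * ρ ^ k := by
  have hpos : ∀ k : ℕ, 0 < ((k : ℝ) + 1) * ucoef a c (k + 1) * ρ ^ k := fun k => by
    have := ucoef_pos ha hc (k + 1)
    positivity
  refine summable_of_ratio_test_tendsto_lt_one h1 (Eventually.of_forall fun k => (hpos k).ne') ?_
  have hx : ∀ b : ℝ, Tendsto (fun n : ℕ => (b + (n : ℝ)) / ((n : ℝ) + 1)) atTop (nhds 1) := by
    intro b
    have h := (tendsto_one_div_add_atTop_nhds_zero_nat (𝕜 := ℝ)).const_mul (b - 1)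
    have h' := h.const_add 1
    simp only [mul_zero, add_zero] at h'
    refine h'.congr fun n => ?_
    have : (n : ℝ) + 1 ≠ 0 := by positivity
    field_simp
    ring
  have hlim := (((hx (a + 1)).pow 2).div (hx (c + 1)) one_ne_zero).mul_const ρ
  simp only [one_pow, div_one, one_mul] at hlim
  refine hlim.congr fun n => ?_
  rw [Real.norm_of_nonneg (hpos n).le, Real.norm_of_nonneg (hpos (n + 1)).le,
    ucoef_succ hc (n + 1)]
  have := (ucoef_pos ha hc (n + 1)).ne'
  have h2 : (n : ℝ) + 1 ≠ 0 := by positivity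
  have h3 : c + 1 + (n : ℝ) ≠ 0 := by positivity
  have h3 : c + ((n : ℝ) + 1) ≠ 0 := by positivity
  have h4 := h0.ne'
  simp only [Pi.div_apply]
  push_cast
  rw [pow_succ]
  field_simp
  ring

lemma summable_deriv {a c : ℝ} (ha : 0 < a) (hc : 0 < c) {ρ : ℝ} (h0 : 0 < ρ) (h1 : ρ < 1) :
    Summable fun k : ℕ => ucoef a c k * ((k : ℝ) * ρ ^ (k - 1)) := by
  rw [← summable_nat_add_iff 1]
  refine (summable_shift ha hc h0 h1).congr fun k => ?_
  simp; ring

lemma summable_ucoef {a c : ℝ} (ha : 0 < a) (hc : 0 < c) {ρ : ℝ} (h0 : 0 < ρ) (h1 : ρ < 1) :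
    Summable fun k : ℕ => ucoef a c k * ρ ^ k := by
  rw [← summable_nat_add_iff 1]
  refine Summable.of_nonneg_of_le (fun k => ?_) (fun k => ?_) (summable_shift ha hc h0 h1)
  · have := ucoef_pos ha hc (k + 1)
    positivity
  · have := ucoef_pos ha hc (k + 1)
    have hk : (0 : ℝ) ≤ k := by positivity
    have h2 : 0 < ucoef a c (k + 1) * ρ ^ k := by positivity
    rw [pow_succ]
    nlinarith [mul_nonneg hk h2.le]

lemma hyp_hasDerivAt {a c : ℝ} (ha : 0 < a) (hc : 0 < c) {w : ℝ} (h0 : 0 < w) (h1 : w < 1) :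
    HasDerivAt (hyp2F1 a a c) (∑' k : ℕ, ucoef a c k * ((k : ℝ) * w ^ (k - 1))) w := by
  obtain ⟨ρ, hw, hρ⟩ := exists_between h1
  have hρ0 : 0 < ρ := h0.trans hw
  have hmem : w ∈ Set.Ioo (-ρ) ρ := ⟨by linarith, hw⟩
  have := hasDerivAt_tsum_of_isPreconnected (𝕜 := ℝ) (t := Set.Ioo (-ρ) ρ) (y₀ := w) (y := w)
    (g := fun (k : ℕ) (y : ℝ) => ucoef a c k * y ^ k)
    (g' := fun (k : ℕ) (y : ℝ) => ucoef a c k * ((k : ℝ) * y ^ (k - 1)))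
    (summable_deriv ha hc hρ0 hρ) isOpen_Ioo isPreconnected_Ioo
    (fun k y _ => (hasDerivAt_pow k y).const_mul _)
    (fun k y hy => by
      have hu := ucoef_pos ha hc k
      have hy' : |y| ≤ ρ := abs_le.2 ⟨hy.1.le, hy.2.le⟩
      rw [norm_mul, norm_mul, norm_pow, Real.norm_of_nonneg hu.le, Real.norm_natCast,
        Real.norm_eq_abs]
      gcongr)
    hmem (summable_ucoef ha hc h0 h1) hmem
  exact this

lemma vcoef_succ {c : ℝ} (hc : 0 < c) (k : ℕ) :
    (poch (c + 1 / 2) (k + 1) * poch (c + 1 / 2 - 1) (k + 1)) /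
      ((Nat.factorial (k + 1) : ℝ) * poch c (k + 1)) =
    2 * (c + 1 / 2 + k) * ucoef (c + 1 / 2) c k
      - (2 * k + 1) * ucoef (c + 1 / 2) c (k + 1) := by
  have h1 := (poch_pos hc k).ne'
  have h2 : (Nat.factorial k : ℝ) ≠ 0 := by exact_mod_cast (Nat.factorial_pos k).ne'
  have h3 : c + (k : ℝ) ≠ 0 := by positivity
  have h4 : (k : ℝ) + 1 ≠ 0 := by positivity
  unfold ucoef
  rw [poch_shift, poch_succ, poch_succ, Nat.factorial_succ]
  push_cast
  generalize poch (c + 1 / 2) k = P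
  field_simp
  ring

lemma hyp_contig {c : ℝ} (hc : 0 < c) {w : ℝ} (h0 : 0 < w) (h1 : w < 1) :
    w * (1 - w) * (∑' k : ℕ, ucoef (c + 1 / 2) c k * ((k : ℝ) * w ^ (k - 1))) =
      (1 / 2 + (c + 1 / 2) * w) * hyp2F1 (c + 1 / 2) (c + 1 / 2) c w
        - hyp2F1 (c + 1 / 2) (c + 1 / 2 - 1) c w / 2 := by
  set a := c + 1 / 2 with ha_def
  have ha : 0 < a := by positivity
  set D := ∑' k : ℕ, ucoef a c k * ((k : ℝ) * w ^ (k - 1)) with hD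
  have hDs := (summable_deriv ha hc h0 h1).hasSum
  have hF : HasSum (fun k : ℕ => ucoef a c k * w ^ k) (hyp2F1 a a c w) :=
    (summable_ucoef ha hc h0 h1).hasSum
  have hu0 : ucoef a c 0 = 1 := by simp [ucoef, poch]
  have hD1 : HasSum (fun k : ℕ => ucoef a c (k + 1) * (((k : ℝ) + 1) * w ^ k)) D := by
    have := (hasSum_nat_add_iff' 1).2 hDs
    simpa using this
  have hF1 : HasSum (fun k : ℕ => ucoef a c (k + 1) * w ^ (k + 1)) (hyp2F1 a a c w - 1) := by
    have := (hasSum_nat_add_iff' 1).2 hF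
    simpa [hu0] using this
  have hcomb := (((hF.mul_left (2 * a * w)).add (hDs.mul_left (2 * w * w))).add
    (hD1.mul_left (-(2 * w)))).add hF1
  have hv : HasSum (fun k : ℕ => (poch a (k + 1) * poch (a - 1) (k + 1)) /
      ((Nat.factorial (k + 1) : ℝ) * poch c (k + 1)) * w ^ (k + 1))
      (2 * a * w * hyp2F1 a a c w + 2 * w * w * D + -(2 * w) * D + (hyp2F1 a a c w - 1)) := by
    refine hcomb.congr_fun fun k => ?_
    have hw : w * ((k : ℝ) * w ^ (k - 1)) = k * w ^ k := by
      cases k with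
      | zero => simp
      | succ m => simp [pow_succ]; ring
    have hco := vcoef_succ hc k
    rw [← ha_def] at hco
    rw [hco]
    linear_combination (-2 * w * ucoef a c k) * hw
  have hH := (hasSum_nat_add_iff (f := fun k : ℕ => (poch a k * poch (a - 1) k) /
      ((Nat.factorial k : ℝ) * poch c k) * w ^ k) 1).1 hv
  have hH' : hyp2F1 a (a - 1) c w = _ := hH.tsum_eq
  rw [hH']
  simp [poch]
  ring

theorem twoPt_first_derivative_left (δ : ℝ) (hδ : 0 < δ) (s : ℝ) (hs : s ∈ Set.Ioo (0 : ℝ) 1)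
    (r : ℝ) (hr : r ∈ Set.Ioo (0 : ℝ) s) :
    HasDerivAt (fun r => twoPt δ s r)
      (Kcoef δ * (1 - s) * (r * (1 - s) / (s * (1 - r))) ^ (-(1 : ℝ) / 2) *
          (1 - r * (1 - s) / (s * (1 - r))) ^ (δ / 2 + 1) *
          hyp2F1 ((δ + 1) / 2) ((δ + 1) / 2) (δ / 2) (r * (1 - s) / (s * (1 - r)))
        - Kcoef δ / 2 * (s / r) * (r * (1 - s) / (s * (1 - r))) ^ ((1 : ℝ) / 2) *
          (1 - r * (1 - s) / (s * (1 - r))) ^ (δ / 2) *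
          hyp2F1 ((δ + 1) / 2) ((δ - 1) / 2) (δ / 2) (r * (1 - s) / (s * (1 - r)))) r := by
  obtain ⟨hs0, hs1⟩ := hs
  obtain ⟨hr0, hrs⟩ := hr
  have hr1 : 0 < 1 - r := by linarith
  have hs1' : 0 < 1 - s := by linarith
  have heq : ∀ y ∈ Set.Ioo 0 s, twoPt δ s y = Kcoef δ * (s * (1 - y) *
      ((y * (1 - s) / (s * (1 - y))) ^ ((1 : ℝ) / 2) *
        (1 - y * (1 - s) / (s * (1 - y))) ^ (δ / 2 + 1) *
        hyp2F1 ((δ + 1) / 2) ((δ + 1) / 2) (δ / 2) (y * (1 - s) / (s * (1 - y))))) := by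
    rintro y ⟨hy0, hys⟩
    have hy1 : 0 < 1 - y := by linarith
    rw [twoPt, if_neg (not_lt.2 hys.le)]
    have hA : 0 < s * (1 - y) := by positivity
    have hB : 0 < y * (1 - s) := by positivity
    have hsy : 0 < s - y := by linarith
    have e1 : 1 - y * (1 - s) / (s * (1 - y)) = (s - y) / (s * (1 - y)) := by
      field_simp; ring
    rw [e1, Real.div_rpow hB.le hA.le, Real.div_rpow hsy.le hA.le]
    have e2 : (s * (1 - y)) ^ (-((δ + 1) / 2)) = s * (1 - y) /
        ((s * (1 - y)) ^ ((1 : ℝ) / 2) * (s * (1 - y)) ^ (δ / 2 + 1)) := by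
      rw [← Real.rpow_add hA]
      nth_rewrite 2 [← Real.rpow_one (s * (1 - y))]
      rw [← Real.rpow_sub hA]
      congr 1; ring
    rw [e2]
    have := (Real.rpow_pos_of_pos hA (1 / 2)).ne'
    have := (Real.rpow_pos_of_pos hA (δ / 2 + 1)).ne'
    generalize (s * (1 - y)) ^ ((1 : ℝ) / 2) = p at *
    generalize (s * (1 - y)) ^ (δ / 2 + 1) = q at *
    field_simp
  have hev : (fun y => twoPt δ s y) =ᶠ[nhds r] fun y => Kcoef δ * (s * (1 - y) *
      ((y * (1 - s) / (s * (1 - y))) ^ ((1 : ℝ) / 2) *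
        (1 - y * (1 - s) / (s * (1 - y))) ^ (δ / 2 + 1) *
        hyp2F1 ((δ + 1) / 2) ((δ + 1) / 2) (δ / 2) (y * (1 - s) / (s * (1 - y))))) := by
    filter_upwards [isOpen_Ioo.mem_nhds (show r ∈ Set.Ioo 0 s from ⟨hr0, hrs⟩)] with y hy
    exact heq y hy
  refine HasDerivAt.congr_of_eventuallyEq ?_ hev
  have hA : 0 < s * (1 - r) := by positivity
  have hB : 0 < r * (1 - s) := by positivity
  have hW : HasDerivAt (fun y => y * (1 - s) / (s * (1 - y)))
      (r * (1 - s) / (s * (1 - r)) / (r * (1 - r))) r := by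
    have h1 := ((hasDerivAt_id r).mul_const (1 - s)).div
      ((((hasDerivAt_id r).const_sub 1)).const_mul s) hA.ne'
    refine h1.congr_deriv ?_
    simp only [id]
    field_simp
    ring
  have hw0 : 0 < r * (1 - s) / (s * (1 - r)) := by positivity
  have hw1 : r * (1 - s) / (s * (1 - r)) < 1 := by
    rw [div_lt_one hA]; nlinarith
  have hc : 0 < δ / 2 := by positivity
  have ea : (δ + 1) / 2 = δ / 2 + 1 / 2 := by ring
  have eb : (δ - 1) / 2 = δ / 2 + 1 / 2 - 1 := by ring
  have hcon := hyp_contig hc hw0 hw1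
  have hder := hyp_hasDerivAt (a := δ / 2 + 1 / 2) (by positivity) hc hw0 hw1
  rw [← eb, ← ea] at hcon
  rw [← ea] at hder
  have hrel : r * (1 - s) / (s * (1 - r)) * (s * (1 - r)) = r * (1 - s) := by field_simp
  have h1 := hW.rpow_const (p := (1 : ℝ) / 2) (Or.inl hw0.ne')
  have h2 := (hW.const_sub 1).rpow_const (p := δ / 2 + 1) (Or.inl (by linarith))
  have h3 := HasDerivAt.comp r hder hW
  have h4 := (((((hasDerivAt_id r).const_sub 1)).const_mul s).mul
    ((h1.mul h2).mul h3)).const_mul (Kcoef δ)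
  refine h4.congr_deriv ?_
  simp only [id, Function.comp_def, Pi.mul_apply]
  generalize (∑' k : ℕ, ucoef ((δ + 1) / 2) (δ / 2) k *
    ((k : ℝ) * (r * (1 - s) / (s * (1 - r))) ^ (k - 1))) = D at *
  generalize r * (1 - s) / (s * (1 - r)) = w at *
  generalize hyp2F1 ((δ + 1) / 2) ((δ + 1) / 2) (δ / 2) w = F at *
  generalize hyp2F1 ((δ + 1) / 2) ((δ - 1) / 2) (δ / 2) w = H at *
  have q1 : w ^ ((1 : ℝ) / 2) = w ^ (-(1 : ℝ) / 2) * w := by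
    nth_rewrite 3 [← Real.rpow_one w]
    rw [← Real.rpow_add hw0]; norm_num
  have q2 : (1 - w) ^ (δ / 2 + 1) = (1 - w) ^ (δ / 2) * (1 - w) := by
    rw [Real.rpow_add_one (by linarith)]
  have q3 : w ^ ((1 : ℝ) / 2 - 1) = w ^ (-(1 : ℝ) / 2) := by norm_num
  have q4 : δ / 2 + 1 - 1 = δ / 2 := by ring
  rw [q4, q3, q1, q2]
  generalize w ^ (-(1 : ℝ) / 2) = p
  generalize (1 - w) ^ (δ / 2) = q
  have hH : H = 2 * ((1 / 2 + (δ / 2 + 1 / 2) * w) * F - w * (1 - w) * D) := by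
    linear_combination 2 * hcon
  have hs' : 1 - s = w * (s * (1 - r)) / r := by
    field_simp; linarith
  rw [hH, hs']
  field_simp
  ring
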